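/- Let r ≥ 3, let H be a T_r-free r-graph with δ⁺_{r-1}(H) ≥ r, and let e = {u_1,…,u_r} ∈ H be an edge. Then the r sets N_H(e \ {u_1}), …, N_H(e \ {u_r}) are pairwise disjoint. -/

import Mathlib

variable {V : Type*} [Fintype V] [DecidableEq V]

/-- The (r-1)-shadow of an r-graph: all (r-1)-sets contained in some edge. -/
def sshadow (r : ℕ) (H : Finset (Finset V)) : Finset (Finset V) :=
  Finset.univ.filter (fun e => e.card = r - 1 ∧ ∃ E ∈ H, e ⊆ E)

/-- The codegree neighborhood of a set `e`: vertices `v` with `e ∪ {v} ∈ H`. -/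
def nbhd (H : Finset (Finset V)) (e : Finset V) : Finset V :=
  Finset.univ.filter (fun v => insert v e ∈ H)

/-- The neighborhood of a vertex. -/
def vnbhd (H : Finset (Finset V)) (v : V) : Finset V :=
  Finset.univ.filter (fun u => u ≠ v ∧ ∃ E ∈ H, u ∈ E ∧ v ∈ E)

/-- `H` is T_r-free. -/
def IsTrFree (r : ℕ) (H : Finset (Finset V)) : Prop :=
  ¬ ∃ (S W : Finset V) (a b : V),
      S.card = r - 1 ∧ W.card = r - 2 ∧ a ≠ b ∧
      a ∉ S ∧ b ∉ S ∧ a ∉ W ∧ b ∉ W ∧ Disjoint S W ∧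
      insert a S ∈ H ∧ insert b S ∈ H ∧ insert a (insert b W) ∈ H

/-- A set of vertices is independent. -/
def IsIndep (H : Finset (Finset V)) (I : Finset V) : Prop :=
  ∀ E ∈ H, (E ∩ I).card ≤ 1

/-- `H` is r-partite. -/
def IsRPartite (r : ℕ) (H : Finset (Finset V)) : Prop :=
  ∃ P : Fin r → Finset V, (∀ v : V, ∃! i, v ∈ P i) ∧ ∀ i, IsIndep H (P i)

/-- Minimum positive codegree. -/
noncomputable def minPosCodeg (r : ℕ) (H : Finset (Finset V)) : ℕ :=
  sInf {k | ∃ e ∈ sshadow r H, (nbhd H e).card = k}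

/-!
In a `T_r`-free `r`-graph of positive codegree at least `r`, the neighborhood of an `(r-1)`-set `S`
is independent. Indeed, suppose an edge contains two vertices `a ≠ b` of `N_H(S)`. A vertex of this
edge lying in `S` can be exchanged for one outside `S`, because the rest of the edge has at least
`r > |S|` neighbors. Repeating this leads to an edge through `a` and `b` that is disjoint from `S`,
and together with `S ∪ {a}` and `S ∪ {b}` it forms a `T_r`. Now if `x` were a common neighbor of
`e \ {u}` and `e \ {u'}`, then `u` and `x` would be neighbors of `e \ {u}` lying in the common
edge `(e \ {u'}) ∪ {x}`.
-/

section

variable {r : ℕ} {H : Finset (Finset V)} {S : Finset V}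

theorem mem_nbhd {v : V} : v ∈ nbhd H S ↔ insert v S ∈ H := by
  simp only [nbhd, Finset.mem_filter_univ]

theorem self_mem_nbhd_erase {E : Finset V} (hE : E ∈ H) {v : V} (hv : v ∈ E) :
    v ∈ nbhd H (E.erase v) := by
  rwa [mem_nbhd, Finset.insert_erase hv]

theorem notMem_of_mem_nbhd (hH : ∀ E ∈ H, E.card = r) (hS : S.card ≠ r) {v : V}
    (hv : v ∈ nbhd H S) : v ∉ S := fun hvS ↦
  hS (hH S (Finset.insert_eq_of_mem hvS ▸ mem_nbhd.mp hv))

theorem erase_mem_sshadow {E : Finset V} (hE : E ∈ H) (hcard : E.card = r) {v : V} (hv : v ∈ E) :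
    E.erase v ∈ sshadow r H := by
  rw [sshadow, Finset.mem_filter_univ, Finset.card_erase_of_mem hv, hcard]
  exact ⟨rfl, E, hE, Finset.erase_subset v E⟩

theorem exists_notMem_insert_erase_mem (hH : ∀ E ∈ H, E.card = r)
    (hdeg : ∀ e ∈ sshadow r H, S.card < (nbhd H e).card)
    {E : Finset V} (hE : E ∈ H) {v : V} (hv : v ∈ E) :
    ∃ w ∉ S, insert w (E.erase v) ∈ H := by
  obtain ⟨w, hw, hwS⟩ := Finset.exists_mem_notMem_of_card_lt_card
    (hdeg _ (erase_mem_sshadow hE (hH E hE) hv))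
  exact ⟨w, hwS, mem_nbhd.mp hw⟩

theorem exists_superset_mem_disjoint (hH : ∀ E ∈ H, E.card = r)
    (hdeg : ∀ e ∈ sshadow r H, S.card < (nbhd H e).card)
    {C E : Finset V} (hE : E ∈ H) (hCE : C ⊆ E) (hSC : Disjoint S C) :
    ∃ F ∈ H, C ⊆ F ∧ Disjoint S F := by
  obtain ⟨F, hF, hmin⟩ := Finset.exists_min_image (H.filter (C ⊆ ·)) (fun F ↦ (F ∩ S).card)
    ⟨E, Finset.mem_filter.mpr ⟨hE, hCE⟩⟩
  obtain ⟨hFH, hCF⟩ := Finset.mem_filter.mp hF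
  refine ⟨F, hFH, hCF, Finset.disjoint_left.mpr fun v hvS hvF ↦ ?_⟩
  obtain ⟨w, hwS, hw⟩ := exists_notMem_insert_erase_mem hH hdeg hFH hvF
  have hvC : v ∉ C := Finset.disjoint_left.mp hSC hvS
  have hCF' : C ⊆ insert w (F.erase v) :=
    (Finset.subset_erase.mpr ⟨hCF, hvC⟩).trans (Finset.subset_insert w _)
  have hlt : (insert w (F.erase v) ∩ S).card < (F ∩ S).card := by
    rw [Finset.insert_inter_of_notMem hwS, Finset.erase_inter]
    exact Finset.card_erase_lt_of_mem (Finset.mem_inter.mpr ⟨hvF, hvS⟩)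
  exact (hmin _ (Finset.mem_filter.mpr ⟨hw, hCF'⟩)).not_gt hlt

theorem IsTrFree.not_disjoint_of_mem_nbhd (hfree : IsTrFree r H) (hS : S.card = r - 1) {a b : V}
    (hab : a ≠ b) (ha : a ∈ nbhd H S) (hb : b ∈ nbhd H S)
    {F : Finset V} (hF : F ∈ H) (hcard : F.card = r) (haF : a ∈ F) (hbF : b ∈ F) :
    ¬Disjoint S F := fun hSF ↦ by
  have hbFa : b ∈ F.erase a := Finset.mem_erase.mpr ⟨hab.symm, hbF⟩
  have hWF : (F.erase a).erase b ⊆ F := (Finset.erase_subset b _).trans (Finset.erase_subset a F)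
  have hWcard : ((F.erase a).erase b).card = r - 2 := by
    rw [Finset.card_erase_of_mem hbFa, Finset.card_erase_of_mem haF, hcard, Nat.sub_sub]
  have haW : a ∉ (F.erase a).erase b := fun h ↦ Finset.notMem_erase a F (Finset.mem_of_mem_erase h)
  have hWH : insert a (insert b ((F.erase a).erase b)) ∈ H := by
    rwa [Finset.insert_erase hbFa, Finset.insert_erase haF]
  exact hfree ⟨S, (F.erase a).erase b, a, b, hS, hWcard, hab,
    Finset.disjoint_right.mp hSF haF, Finset.disjoint_right.mp hSF hbF,
    haW, Finset.notMem_erase b _, hSF.mono_right hWF, mem_nbhd.mp ha, mem_nbhd.mp hb, hWH⟩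

theorem IsTrFree.isIndep_nbhd (hfree : IsTrFree r H) (hH : ∀ E ∈ H, E.card = r)
    (hdeg : ∀ e ∈ sshadow r H, r ≤ (nbhd H e).card) (hS : S.card = r - 1) :
    IsIndep H (nbhd H S) := by
  intro E hE
  by_contra! hcard
  obtain ⟨a, ha, b, hb, hab⟩ := Finset.one_lt_card.mp hcard
  obtain ⟨haE, haN⟩ := Finset.mem_inter.mp ha
  obtain ⟨hbE, hbN⟩ := Finset.mem_inter.mp hb
  have hSr : S.card < r := by
    have hpos : 0 < r := hH E hE ▸ Finset.card_pos.mpr ⟨a, haE⟩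
    omega
  have hdisj : Disjoint S {a, b} := by
    simp only [Finset.disjoint_insert_right, Finset.disjoint_singleton_right]
    exact ⟨notMem_of_mem_nbhd hH hSr.ne haN, notMem_of_mem_nbhd hH hSr.ne hbN⟩
  have habE : {a, b} ⊆ E :=
    Finset.insert_subset haE (Finset.singleton_subset_iff.mpr hbE)
  obtain ⟨F, hF, habF, hSF⟩ := exists_superset_mem_disjoint hH
    (fun e he ↦ hSr.trans_le (hdeg e he)) hE habE hdisj
  obtain ⟨haF, hbF⟩ := Finset.insert_subset_iff.mp habF
  exact hfree.not_disjoint_of_mem_nbhd hS hab haN hbN hF (hH F hF) haF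
    (Finset.singleton_subset_iff.mp hbF) hSF

theorem stmt4_general (hH : ∀ E ∈ H, E.card = r) (hfree : IsTrFree r H)
    (hdeg : ∀ e ∈ sshadow r H, r ≤ (nbhd H e).card) {e : Finset V} (he : e ∈ H) :
    (e : Set V).PairwiseDisjoint fun u ↦ nbhd H (e.erase u) := by
  intro u hu u' hu' huu'
  refine Finset.disjoint_left.mpr fun x hx hx' ↦ ?_
  have hcard : (e.erase u).card = r - 1 := by rw [Finset.card_erase_of_mem hu, hH e he]
  have hue : u ∈ e.erase u' := Finset.mem_erase.mpr ⟨huu', hu⟩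
  have hcard' : (e.erase u').card ≠ r := hH e he ▸ (Finset.card_erase_lt_of_mem hu').ne
  have hux : u ≠ x := ne_of_mem_of_not_mem hue (notMem_of_mem_nbhd hH hcard' hx')
  have hle := hfree.isIndep_nbhd hH hdeg hcard _ (mem_nbhd.mp hx')
  refine hle.not_gt (Finset.one_lt_card.mpr ⟨u, ?_, x, ?_, hux⟩)
  · exact Finset.mem_inter.mpr ⟨Finset.mem_insert_of_mem hue, self_mem_nbhd_erase he hu⟩
  · exact Finset.mem_inter.mpr ⟨Finset.mem_insert_self x _, hx⟩

end

/-- Let `H` be a `T_r`-free `r`-graph with minimum positive codegree at least `r`, and let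
`e ∈ H` be an edge. Then the neighborhoods `N_H(e \\ {u})`, for `u ∈ e`, are pairwise
disjoint. -/
theorem stmt4 {V : Type*} [Fintype V] [DecidableEq V] {r : ℕ} (hr : 3 ≤ r)
    {H : Finset (Finset V)} (hH : ∀ E ∈ H, E.card = r)
    (hfree : IsTrFree r H)
    (hdeg : ∀ e ∈ sshadow r H, r ≤ (nbhd H e).card)
    {e : Finset V} (he : e ∈ H) :
    ∀ u ∈ e, ∀ u' ∈ e, u ≠ u' →
      Disjoint (nbhd H (e.erase u)) (nbhd H (e.erase u')) :=
  fun _ hu _ hu' huu' ↦ stmt4_general hH hfree hdeg he hu hu' huu'
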